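/- Assume φ0 and φ1 are continuous. For t ∈ ℝ define A11(t) = ∫_{−∞}^{t} φ0(y) dy, A22(t) = ∫_{t}^{∞} φ1(y) dy, q0(t) = p0·A11(t) + p1·(1−A22(t)), and the single-threshold mutual information I_1(t) = H_b(q0(t)) − p0·H_b(A11(t)) − p1·H_b(A22(t)). If A11(t), A22(t), q0(t) ∈ (0,1), then I_1 is differentiable at t with derivative I_1'(t) = p0·φ0(t)·[log((1−q0(t))/q0(t)) − log((1−A11(t))/A11(t))] + p1·φ1(t)·[log((1−q0(t))/q0(t)) + log((1−A22(t))/A22(t))]. -/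

import Mathlib

/-! By the fundamental theorem of calculus `A11` and `A22` have derivatives `φ0 t` and `-φ1 t`, so
`q0` has derivative `p0 * φ0 t + p1 * φ1 t`. The binary entropy has derivative `log ((1 - w) / w)`
on `(0, 1)`, and the formula for `I1` is the chain rule. -/

open MeasureTheory Real Set Filter

/-- Binary entropy function. -/
noncomputable def Hb (w : ℝ) : ℝ := -(w * Real.log w) - (1 - w) * Real.log (1 - w)

/-- `A11 t = ∫_{-∞}^t φ0`. -/
noncomputable def A11 (φ0 : ℝ → ℝ) (t : ℝ) : ℝ := ∫ y in Set.Iio t, φ0 y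

/-- `A22 t = ∫_t^∞ φ1`. -/
noncomputable def A22 (φ1 : ℝ → ℝ) (t : ℝ) : ℝ := ∫ y in Set.Ioi t, φ1 y

noncomputable def q0 (p0 p1 : ℝ) (φ0 φ1 : ℝ → ℝ) (t : ℝ) : ℝ :=
  p0 * A11 φ0 t + p1 * (1 - A22 φ1 t)

/-- Single-threshold mutual information. -/
noncomputable def I1 (p0 p1 : ℝ) (φ0 φ1 : ℝ → ℝ) (t : ℝ) : ℝ :=
  Hb (q0 p0 p1 φ0 φ1 t) - p0 * Hb (A11 φ0 t) - p1 * Hb (A22 φ1 t)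

section IntegralHalfLine

variable {E : Type*} [NormedAddCommGroup E] [NormedSpace ℝ E] [CompleteSpace E]
  {f : ℝ → E} {a b t : ℝ}

lemma hasDerivAt_integral_Iio (hf : IntegrableOn f (Iio b)) (htb : t < b)
    (hc : ContinuousAt f t) : HasDerivAt (fun u => ∫ y in Iio u, f y) (f t) t := by
  have hIic {u : ℝ} (hu : u < b) : IntegrableOn f (Iic u) := hf.mono_set (Iic_subset_Iio.2 hu)
  have h_ftc : HasDerivAt (fun u => ∫ y in t..u, f y) (f t) t :=
    intervalIntegral.integral_hasDerivAt_right .refl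
      ⟨Iio b, Iio_mem_nhds htb, hf.aestronglyMeasurable⟩ hc
  refine (h_ftc.const_add (∫ y in Iio t, f y)).congr_of_eventuallyEq ?_
  filter_upwards [Iio_mem_nhds htb] with u hu
  rw [← intervalIntegral.integral_Iic_sub_Iic (hIic htb) (hIic hu), integral_Iic_eq_integral_Iio,
    integral_Iic_eq_integral_Iio, add_sub_cancel]

lemma hasDerivAt_integral_Ioi (hf : IntegrableOn f (Ioi a)) (hat : a < t)
    (hc : ContinuousAt f t) : HasDerivAt (fun u => ∫ y in Ioi u, f y) (-f t) t := by
  have hIoi {u : ℝ} (hu : a < u) : IntegrableOn f (Ioi u) := hf.mono_set (Ioi_subset_Ioi hu.le)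
  have h_ftc : HasDerivAt (fun u => ∫ y in t..u, f y) (f t) t :=
    intervalIntegral.integral_hasDerivAt_right .refl
      ⟨Ioi a, Ioi_mem_nhds hat, hf.aestronglyMeasurable⟩ hc
  refine (h_ftc.const_sub (∫ y in Ioi t, f y)).congr_of_eventuallyEq ?_
  filter_upwards [Ioi_mem_nhds hat] with u hu
  rw [← intervalIntegral.integral_Ioi_sub_Ioi' (hIoi hat) (hIoi hu), sub_sub_cancel]

end IntegralHalfLine

lemma Hb_eq_binEntropy : Hb = binEntropy := by
  funext w
  simp only [Hb, binEntropy, log_inv]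
  ring

lemma hasDerivAt_Hb {w : ℝ} (h0 : w ≠ 0) (h1 : w ≠ 1) : HasDerivAt Hb (log ((1 - w) / w)) w := by
  rw [Hb_eq_binEntropy, log_div (sub_ne_zero.2 h1.symm) h0]
  exact hasDerivAt_binEntropy h0 h1

lemma hasDerivAt_q0 (p0 p1 : ℝ) {φ0 φ1 : ℝ → ℝ} {a b t : ℝ} (h11 : HasDerivAt (A11 φ0) a t)
    (h22 : HasDerivAt (A22 φ1) b t) :
    HasDerivAt (q0 p0 p1 φ0 φ1) (p0 * a - p1 * b) t :=
  ((h11.const_mul p0).add ((h22.const_sub 1).const_mul p1)).congr_deriv (by ring)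

theorem stmt_1_general (p0 p1 : ℝ) {φ0 φ1 : ℝ → ℝ} {a b t : ℝ}
    (hi0 : IntegrableOn φ0 (Iio b)) (htb : t < b) (hi1 : IntegrableOn φ1 (Ioi a)) (hat : a < t)
    (hc0 : ContinuousAt φ0 t) (hc1 : ContinuousAt φ1 t)
    (hA11 : A11 φ0 t ∈ Ioo 0 1) (hA22 : A22 φ1 t ∈ Ioo 0 1)
    (hq0 : q0 p0 p1 φ0 φ1 t ∈ Ioo 0 1) :
    HasDerivAt (I1 p0 p1 φ0 φ1)
      (p0 * φ0 t *
          (log ((1 - q0 p0 p1 φ0 φ1 t) / q0 p0 p1 φ0 φ1 t) -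
            log ((1 - A11 φ0 t) / A11 φ0 t)) +
        p1 * φ1 t *
          (log ((1 - q0 p0 p1 φ0 φ1 t) / q0 p0 p1 φ0 φ1 t) +
            log ((1 - A22 φ1 t) / A22 φ1 t))) t := by
  have h11 : HasDerivAt (A11 φ0) (φ0 t) t := hasDerivAt_integral_Iio hi0 htb hc0
  have h22 : HasDerivAt (A22 φ1) (-φ1 t) t := hasDerivAt_integral_Ioi hi1 hat hc1
  have hHb_q0 := (hasDerivAt_Hb hq0.1.ne' hq0.2.ne).comp t (hasDerivAt_q0 p0 p1 h11 h22)
  have hHb_A11 := (hasDerivAt_Hb hA11.1.ne' hA11.2.ne).comp t h11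
  have hHb_A22 := (hasDerivAt_Hb hA22.1.ne' hA22.2.ne).comp t h22
  exact ((hHb_q0.sub (hHb_A11.const_mul p0)).sub (hHb_A22.const_mul p1)).congr_deriv (by ring)

theorem stmt_1
    (p0 p1 : ℝ) (hp0 : p0 ∈ Set.Ioo (0:ℝ) 1) (hp1 : p1 ∈ Set.Ioo (0:ℝ) 1)
    (hp : p0 + p1 = 1)
    (φ0 φ1 : ℝ → ℝ) (hφ0 : ∀ y, 0 ≤ φ0 y) (hφ1 : ∀ y, 0 ≤ φ1 y)
    (hi0 : Integrable φ0) (hi1 : Integrable φ1)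
    (hI0 : ∫ y, φ0 y = 1) (hI1 : ∫ y, φ1 y = 1)
    (hc0 : Continuous φ0) (hc1 : Continuous φ1)
    (t : ℝ)
    (hA11 : A11 φ0 t ∈ Set.Ioo (0:ℝ) 1)
    (hA22 : A22 φ1 t ∈ Set.Ioo (0:ℝ) 1)
    (hq0 : q0 p0 p1 φ0 φ1 t ∈ Set.Ioo (0:ℝ) 1) :
    HasDerivAt (I1 p0 p1 φ0 φ1)
      (p0 * φ0 t *
          (Real.log ((1 - q0 p0 p1 φ0 φ1 t) / q0 p0 p1 φ0 φ1 t) -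
            Real.log ((1 - A11 φ0 t) / A11 φ0 t)) +
        p1 * φ1 t *
          (Real.log ((1 - q0 p0 p1 φ0 φ1 t) / q0 p0 p1 φ0 φ1 t) +
            Real.log ((1 - A22 φ1 t) / A22 φ1 t))) t := by
  exact stmt_1_general p0 p1 hi0.integrableOn (lt_add_one t) hi1.integrableOn (sub_one_lt t)
    hc0.continuousAt hc1.continuousAt hA11 hA22 hq0
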